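/- For every m ≥ 1 and every ε > 0, there exists an m-generated group G (with generating set A of size m) which is an extension of an abelian group by a nilpotent group (hence amenable), such that the growth rate of G satisfies ω(G,A) ≥ 2m - 1 - ε. -/

import Mathlib

open Filter Topology

/-- Evaluate a word over the alphabet `A^{±1}` (a letter is a pair `(i, b)`, where
`b = true` means the generator `σ i` and `b = false` means its inverse) in a group. -/
def wordEval {m : ℕ} {G : Type*} [Group G] (σ : Fin m → G)
    (w : List (Fin m × Bool)) : G :=
  (w.map fun ℓ => if ℓ.2 then σ ℓ.1 else (σ ℓ.1)⁻¹).prod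

/-- The ball `B(n) = {g ∈ G : ℓ(g) ≤ n}` of radius `n` in a group with respect to the
generating map `σ`: the set of elements represented by words of length at most `n`. -/
def ball {m : ℕ} {G : Type*} [Group G] (σ : Fin m → G) (n : ℕ) : Set G :=
  {g | ∃ w : List (Fin m × Bool), w.length ≤ n ∧ wordEval σ w = g}

/-- The growth rate `ω(G, A) = lim_{n→∞} |B(n)|^{1/n}`; the limit exists by
submultiplicativity of `|B(n)|`, hence equals the `limsup`. -/
noncomputable def growthRate {m : ℕ} {G : Type*} [Group G] (σ : Fin m → G) : ℝ :=
  Filter.limsup (fun n : ℕ => ((ball σ n).ncard : ℝ) ^ (1 / (n : ℝ))) Filter.atTop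

/-- A group is *amenable* if it admits a finitely additive, left-invariant probability
measure defined on all of its subsets. -/
def IsAmenable (G : Type*) [Group G] : Prop :=
  ∃ μ : Set G → ℝ,
    (∀ s : Set G, 0 ≤ μ s) ∧
    μ Set.univ = 1 ∧
    (∀ s t : Set G, Disjoint s t → μ (s ∪ t) = μ s + μ t) ∧
    (∀ (g : G) (s : Set G), μ ((g * ·) '' s) = μ s)

/-- `G` is an extension of an abelian group by a nilpotent group: it has an abelian
normal subgroup `N` such that `G/N` is nilpotent. -/
def IsAbelianByNilpotent (G : Type*) [Group G] : Prop :=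
  ∃ N : Subgroup G, N.Normal ∧ (∀ x ∈ N, ∀ y ∈ N, x * y = y * x) ∧
    ∀ [N.Normal], Group.IsNilpotent (G ⧸ N)

/-- `G` is generated by the `m` elements `σ 0, …, σ (m-1)`, is abelian-by-nilpotent
(hence amenable), and has growth rate at least `2m - 1 - ε` w.r.t. these generators. -/
def IsAbelianByNilpotentWithLargeGrowth (m : ℕ) (ε : ℝ) (G : Type) [Group G]
    (σ : Fin m → G) : Prop :=
  Subgroup.closure (Set.range σ) = ⊤ ∧ IsAbelianByNilpotent G ∧ IsAmenable G ∧
    2 * (m : ℝ) - 1 - ε ≤ growthRate σ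

/-!
Fix a generator `a` and call the exponent sum of a word in `a` its height. A block is a reduced
word which climbs from height `0` to its total height `h`, leaving height `0` at once and for good
and never exceeding `h`. Since free groups are residually nilpotent, a finite set `S` of blocks is
mapped injectively into a nilpotent group `P` by a suitable choice of generators. Let the
generators act on `P × ℤ`, where `ℤ` records the height, and let `a` in addition switch a lamp
at the current position, i.e. lift the generators to the wreath product of `ℤ` and `P × ℤ`. In a
concatenation of blocks, the lamp switched at the end of the first block is the only one of height
`h` which is ever lit, because its surroundings are visited only once. So the element of the wreath
product determines the first block and, inductively, all of them: `S` freely generates a free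
monoid. If all blocks have length `N`, then the growth rate is at least `|S| ^ (1 / N)`.

It remains to find many blocks. Among the reduced words of length `q`, about `(2 * m - 1) ^ q` in
number, a proportion of at least `1 / (2 * q + 1)` share a common height. Following such a word by
another one in which `a` is inverted yields about `(2 * m - 1) ^ (2 * q)` words of height `0`, up to
a polynomial factor, and concatenations of many of them, flanked by sufficiently high powers of
`a`, are blocks.

Groups which are abelian-by-nilpotent are solvable, and solvable groups are amenable by the
Markov-Kakutani fixed point theorem, applied to the invariant means along the derived series.
-/

section FixedPoint

variable {E : Type*} [AddCommGroup E] [Module ℝ E] [TopologicalSpace E] [IsTopologicalAddGroup E]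
  [ContinuousSMul ℝ E] [T2Space E] {K : Set E}

theorem exists_fixedPoint_of_mapsTo_compact_convex (hK : IsCompact K) (hconv : Convex ℝ K)
    (hne : K.Nonempty) (f : E →L[ℝ] E) (hf : Set.MapsTo f K K) : ∃ x ∈ K, f x = x := by
  obtain ⟨x, hx⟩ := hne
  have hiter (n : ℕ) : f^[n] x ∈ K := hf.iterate n hx
  let avg (n : ℕ) : E := birkhoffAverage ℝ f id n x
  have havg : ∀ᶠ n in atTop, avg n ∈ K := by
    filter_upwards [eventually_ge_atTop 1] with n hn
    have hn : (n : ℝ) ≠ 0 := by positivity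
    simp only [avg, birkhoffAverage, birkhoffSum, id, Finset.smul_sum]
    exact hconv.sum_mem (fun _ _ ↦ by positivity) (by simp [hn]) fun i _ ↦ hiter i
  -- `f` displaces its ergodic averages less and less, because the sum defining them telescopes
  have hdispl (n : ℕ) : f (avg n) - avg n = (n : ℝ)⁻¹ • (f^[n] x - x) := by
    have hshift : f (avg n) = birkhoffAverage ℝ f id n (f x) := by
      simp only [avg, map_birkhoffAverage ℝ ℝ f]
      simp only [birkhoffAverage, birkhoffSum, Function.comp_apply, id,
        ← Function.iterate_succ_apply, ← Function.iterate_succ_apply']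
    rw [hshift, birkhoffAverage_apply_sub_birkhoffAverage, id, id]
  have hlim : Tendsto (fun n ↦ f (avg n) - avg n) atTop (𝓝 0) := by
    simp only [hdispl]
    exact (hK.image (continuous_sub_right x)).isVonNBounded ℝ |>.smul_tendsto_zero
      (.of_forall fun n ↦ Set.mem_image_of_mem _ (hiter n)) tendsto_inv_atTop_nhds_zero_nat
  have hclosed : IsClosed ((fun y ↦ f y - y) '' K) :=
    (hK.image (f.continuous.sub continuous_id)).isClosed
  obtain ⟨y, hy, hfy⟩ := hclosed.mem_of_tendsto hlim
    (havg.mono fun n hn ↦ Set.mem_image_of_mem _ hn)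
  exact ⟨y, hy, sub_eq_zero.mp hfy⟩

variable {ι : Type*} {f : ι → E →L[ℝ] E}

theorem exists_common_fixedPoint_finset (hK : IsCompact K) (hconv : Convex ℝ K)
    (hne : K.Nonempty) (hf : ∀ i, Set.MapsTo (f i) K K)
    (hcomm : ∀ i j, ∀ x ∈ K, f i (f j x) = f j (f i x)) (s : Finset ι) :
    ∃ x ∈ K, ∀ i ∈ s, f i x = x := by
  classical
  induction s using Finset.induction_on with
  | empty => exact hne.imp fun _ hx ↦ ⟨hx, by simp⟩
  | insert i s _ ih =>
    let F : Set E := K ∩ ⋂ j ∈ s, {x | f j x = x}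
    have hF : IsCompact F := hK.inter_right <| isClosed_biInter fun j _ ↦
      isClosed_eq (f j).continuous continuous_id
    have hFconv : Convex ℝ F := hconv.inter <| convex_iInter₂ fun j _ ↦
      (LinearMap.eqLocus (f j : E →ₗ[ℝ] E) LinearMap.id).convex
    have hFne : F.Nonempty := by simpa [F, Set.Nonempty] using ih
    have hFmaps : Set.MapsTo (f i) F F := fun x hx ↦ by
      simp only [F, Set.mem_inter_iff, Set.mem_iInter, Set.mem_ofPred_eq] at hx ⊢
      exact ⟨hf i hx.1, fun j hj ↦ by rw [hcomm j i x hx.1, hx.2 j hj]⟩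
    obtain ⟨x, hx, hfix⟩ := exists_fixedPoint_of_mapsTo_compact_convex hF hFconv hFne (f i) hFmaps
    exact ⟨x, hx.1, Finset.forall_mem_insert .. |>.mpr ⟨hfix, by simpa [F] using hx.2⟩⟩

theorem exists_common_fixedPoint_of_commute (hK : IsCompact K) (hconv : Convex ℝ K)
    (hne : K.Nonempty) (hf : ∀ i, Set.MapsTo (f i) K K)
    (hcomm : ∀ i j, ∀ x ∈ K, f i (f j x) = f j (f i x)) : ∃ x ∈ K, ∀ i, f i x = x := by
  have := hK.inter_iInter_nonempty (fun i ↦ {x | f i x = x})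
    (fun i ↦ isClosed_eq (f i).continuous continuous_id) fun s ↦ by
      simpa [Set.Nonempty] using exists_common_fixedPoint_finset hK hconv hne hf hcomm s
  simpa [Set.Nonempty] using this

end FixedPoint

section Amenable

open scoped commutatorElement

variable {G : Type*} [Group G]

/-- The finitely additive probability measures on all subsets of `G` which are invariant under left
translation by the elements of `H`. -/
def invariantMeans (H : Subgroup G) : Set (Set G → ℝ) :=
  {μ | (∀ s, 0 ≤ μ s) ∧ μ Set.univ = 1 ∧ (∀ s t, Disjoint s t → μ (s ∪ t) = μ s + μ t) ∧
    ∀ g ∈ H, ∀ s, μ ((g * ·) '' s) = μ s}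

theorem isAmenable_iff_invariantMeans_top_nonempty :
    IsAmenable G ↔ (invariantMeans (⊤ : Subgroup G)).Nonempty := by
  simp [IsAmenable, invariantMeans, Set.Nonempty]

theorem apply_mem_Icc_of_mem_invariantMeans {H : Subgroup G} {μ : Set G → ℝ}
    (hμ : μ ∈ invariantMeans H) (s : Set G) : μ s ∈ Set.Icc 0 1 := by
  obtain ⟨hnonneg, huniv, hadd, -⟩ := hμ
  have hcompl := hadd s sᶜ disjoint_compl_right
  rw [Set.union_compl_self, huniv] at hcompl
  exact ⟨hnonneg s, by linarith [hnonneg sᶜ]⟩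

theorem isClosed_invariantMeans (H : Subgroup G) : IsClosed (invariantMeans H) := by
  simp only [invariantMeans, Set.ofPred_and, Set.ofPred_forall]
  refine .inter ?_ (.inter ?_ (.inter ?_ ?_))
  · exact isClosed_iInter fun s ↦ isClosed_le continuous_const (continuous_apply s)
  · exact isClosed_eq (continuous_apply _) continuous_const
  · exact isClosed_iInter fun s ↦ isClosed_iInter fun t ↦ isClosed_iInter fun _ ↦
      isClosed_eq (continuous_apply _) ((continuous_apply s).add (continuous_apply t))
  · exact isClosed_iInter fun g ↦ isClosed_iInter fun _ ↦ isClosed_iInter fun s ↦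
      isClosed_eq (continuous_apply _) (continuous_apply s)

theorem isCompact_invariantMeans (H : Subgroup G) : IsCompact (invariantMeans H) :=
  (isCompact_univ_pi fun _ ↦ isCompact_Icc).of_isClosed_subset (isClosed_invariantMeans H)
    fun _ hμ s _ ↦ apply_mem_Icc_of_mem_invariantMeans hμ s

theorem convex_invariantMeans (H : Subgroup G) : Convex ℝ (invariantMeans H) := by
  rintro μ ⟨hμ, hμ', hμadd, hμinv⟩ ν ⟨hν, hν', hνadd, hνinv⟩ a b ha hb hab
  refine ⟨fun s ↦ ?_, ?_, fun s t hst ↦ ?_, fun g hg s ↦ ?_⟩ <;>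
    simp only [Pi.add_apply, Pi.smul_apply, smul_eq_mul]
  · exact add_nonneg (mul_nonneg ha (hμ s)) (mul_nonneg hb (hν s))
  · rw [hμ', hν', mul_one, mul_one, hab]
  · rw [hμadd s t hst, hνadd s t hst]; ring
  · rw [hμinv g hg s, hνinv g hg s]

theorem image_mul_left_image_mul_left (g h : G) (s : Set G) :
    (g * ·) '' ((h * ·) '' s) = (g * h * ·) '' s := by
  simp only [Set.image_image, mul_assoc]

/-- Left translation acting on the set functions on `G`, as a continuous linear operator. -/
def leftTranslate (g : G) : (Set G → ℝ) →L[ℝ] (Set G → ℝ) :=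
  ContinuousLinearMap.pi fun s ↦ ContinuousLinearMap.proj ((g * ·) '' s)

theorem leftTranslate_apply (g : G) (μ : Set G → ℝ) (s : Set G) :
    leftTranslate g μ s = μ ((g * ·) '' s) := rfl

theorem mapsTo_leftTranslate_invariantMeans (D : Subgroup G) [D.Normal] (g : G) :
    Set.MapsTo (leftTranslate g) (invariantMeans D) (invariantMeans D) := by
  rintro μ ⟨hnonneg, huniv, hadd, hinv⟩
  refine ⟨fun s ↦ hnonneg _, ?_, fun s t hst ↦ ?_, fun d hd s ↦ ?_⟩ <;>
    simp only [leftTranslate_apply]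
  · rw [Set.image_univ_of_surjective (mul_left_surjective g), huniv]
  · rw [Set.image_union, hadd _ _ ((Set.disjoint_image_iff (mul_right_injective g)).mpr hst)]
  · have hconj : g * d = g * d * g⁻¹ * g := by group
    rw [image_mul_left_image_mul_left, hconj, ← image_mul_left_image_mul_left,
      hinv _ (Subgroup.Normal.conj_mem ‹_› d hd g)]

theorem leftTranslate_comm_of_mem_invariantMeans {D : Subgroup G} {g h : G} (hgh : ⁅g, h⁆ ∈ D)
    {μ : Set G → ℝ} (hμ : μ ∈ invariantMeans D) :
    leftTranslate g (leftTranslate h μ) = leftTranslate h (leftTranslate g μ) := by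
  funext s
  have hcomm : h * g = ⁅g, h⁆⁻¹ * (g * h) := by rw [commutatorElement_def]; group
  simp only [leftTranslate_apply, image_mul_left_image_mul_left]
  rw [hcomm, ← image_mul_left_image_mul_left, hμ.2.2.2 _ (D.inv_mem hgh)]

theorem invariantMeans_nonempty_of_commutator_le {D H : Subgroup G} [D.Normal] (hDH : ⁅H, H⁆ ≤ D)
    (hne : (invariantMeans D).Nonempty) : (invariantMeans H).Nonempty := by
  obtain ⟨μ, ⟨hnonneg, huniv, hadd, -⟩, hfix⟩ :=
    exists_common_fixedPoint_of_commute (f := fun h : H ↦ leftTranslate (h : G))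
      (isCompact_invariantMeans D) (convex_invariantMeans D) hne
      (fun h ↦ mapsTo_leftTranslate_invariantMeans D h)
      fun g h _ hμ ↦ leftTranslate_comm_of_mem_invariantMeans
        (hDH (Subgroup.commutator_mem_commutator g.2 h.2)) hμ
  exact ⟨μ, hnonneg, huniv, hadd, fun g hg s ↦ congrFun (hfix ⟨g, hg⟩) s⟩

theorem invariantMeans_bot_nonempty : (invariantMeans (⊥ : Subgroup G)).Nonempty := by
  classical
  refine ⟨fun s ↦ s.indicator 1 1, fun s ↦ Set.indicator_nonneg (by simp) _, by simp,
    fun s t hst ↦ congrFun (Set.indicator_union_of_disjoint hst 1) 1, fun g hg s ↦ ?_⟩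
  simp [Subgroup.mem_bot.mp hg]

theorem isAmenable_of_isSolvable [hG : Group.IsSolvable G] : IsAmenable G := by
  obtain ⟨n, hn⟩ := hG.solvable
  have hdescend (k : ℕ) (hk : (invariantMeans (derivedSeries G k)).Nonempty) :
      (invariantMeans (⊤ : Subgroup G)).Nonempty := by
    induction k with
    | zero => exact hk
    | succ k ih =>
      have := derivedSeries_normal G (k + 1)
      exact ih (invariantMeans_nonempty_of_commutator_le (derivedSeries_succ G k).ge hk)
  exact isAmenable_iff_invariantMeans_top_nonempty.mpr
    (hdescend n (hn ▸ invariantMeans_bot_nonempty))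

theorem IsAbelianByNilpotent.isSolvable (hG : IsAbelianByNilpotent G) : Group.IsSolvable G := by
  obtain ⟨N, hN, hcomm, hnil⟩ := hG
  have := @hnil hN
  exact (Group.isSolvable_iff_subgroup_quotient N).mpr
    ⟨Group.isSolvable_of_comm fun a b ↦ Subtype.ext (hcomm a a.2 b b.2), inferInstance⟩

theorem IsAbelianByNilpotent.isAmenable (hG : IsAbelianByNilpotent G) : IsAmenable G :=
  have := hG.isSolvable
  isAmenable_of_isSolvable

end Amenable

section Unitriangular

open Matrix

variable {ι R : Type*} [Fintype ι] [LinearOrder ι] [CommRing R]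

theorem isUpperTriangular_mul_apply_self {A B : Matrix ι ι R} (hA : A.IsUpperTriangular)
    (hB : B.IsUpperTriangular) (i : ι) : (A * B) i i = A i i * B i i := by
  rw [mul_apply]
  refine Finset.sum_eq_single i (fun j _ hj ↦ ?_) (by simp)
  rcases hj.lt_or_gt with h | h
  · rw [hA h, zero_mul]
  · rw [hB h, mul_zero]

variable (ι R) in
/-- The group of upper triangular matrices with unit diagonal. -/
def unitriangularGroup : Subgroup (GL ι R) where
  carrier := {A | A.1.IsUpperTriangular ∧ ∀ i, A.1 i i = 1}
  one_mem' := ⟨blockTriangular_one, fun i ↦ by simp⟩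
  mul_mem' := fun {A B} hA hB ↦ ⟨hA.1.mul hB.1, fun i ↦ by
    rw [Units.val_mul, isUpperTriangular_mul_apply_self hA.1 hB.1, hA.2, hB.2, one_mul]⟩
  inv_mem' := fun {A} hA ↦ by
    have := A.invertible
    have htri : A⁻¹.1.IsUpperTriangular := by
      rw [coe_units_inv]
      exact blockTriangular_inv_of_blockTriangular hA.1
    refine ⟨htri, fun i ↦ ?_⟩
    have hdiag := isUpperTriangular_mul_apply_self hA.1 htri i
    rwa [Units.mul_inv, one_apply_eq, hA.2, one_mul, eq_comm] at hdiag

theorem isPGroup_unitriangularGroup (p : ℕ) [Fact p.Prime] [CharP R p] :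
    IsPGroup p (unitriangularGroup ι R) := by
  rintro ⟨A, htri, hdiag⟩
  cases isEmpty_or_nonempty ι
  · exact ⟨0, Subsingleton.elim _ _⟩
  have hnil : (A.1 - 1) ^ Fintype.card ι = 0 := by
    simpa [charpoly_of_isUpperTriangular _ htri, hdiag] using aeval_self_charpoly A.1
  refine ⟨Fintype.card ι, Subtype.ext (Units.ext ?_)⟩
  have hzero := pow_eq_zero_of_le (Nat.lt_pow_self (Fact.out : p.Prime).one_lt).le hnil
  rw [sub_pow_char_pow_of_commute p _ (Commute.one_right _), one_pow, sub_eq_zero] at hzero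
  rw [SubmonoidClass.coe_pow, Units.val_pow_eq_pow_val]
  exact hzero

theorem isNilpotent_unitriangularGroup_zmod (p : ℕ) [Fact p.Prime] :
    Group.IsNilpotent (unitriangularGroup ι (ZMod p)) :=
  IsPGroup.isNilpotent (isPGroup_unitriangularGroup p)

end Unitriangular

section Bidiagonal

open Matrix

variable {n : ℕ} {R : Type*} [CommRing R]

/-- The square matrix with unit diagonal, superdiagonal `p`, and zeros elsewhere. -/
def bidiagonal (p : Fin n → R) : Matrix (Fin (n + 1)) (Fin (n + 1)) R :=
  1 + of fun s ↦ Fin.cons 0 fun i ↦ if s = i.castSucc then p i else 0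

theorem bidiagonal_apply_self (p : Fin n → R) (s : Fin (n + 1)) : bidiagonal p s s = 1 := by
  cases s using Fin.cases <;> simp [bidiagonal, Fin.castSucc_lt_succ.ne']

theorem bidiagonal_isUpperTriangular (p : Fin n → R) : (bidiagonal p).IsUpperTriangular := by
  intro s t hts
  have hts : t < s := hts
  cases t using Fin.cases with
  | zero => simp [bidiagonal, one_apply_ne hts.ne']
  | succ i => simp [bidiagonal, one_apply_ne hts.ne', ((Fin.castSucc_lt_succ).trans hts).ne']

theorem det_bidiagonal (p : Fin n → R) : (bidiagonal p).det = 1 := by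
  simp [det_of_isUpperTriangular (bidiagonal_isUpperTriangular p), bidiagonal_apply_self]

theorem vecMul_bidiagonal_succ (p : Fin n → R) (v : Fin (n + 1) → R) (i : Fin n) :
    (v ᵥ* bidiagonal p) i.succ = v i.succ + v i.castSucc * p i := by
  simp only [bidiagonal, vecMul_add, vecMul_one, Pi.add_apply]
  simp [vecMul, dotProduct]

/-- `bidiagonal p` as an element of the unitriangular group. -/
noncomputable def bidiagonalUnit (p : Fin n → R) : unitriangularGroup (Fin (n + 1)) R :=
  ⟨GeneralLinearGroup.mk'' (bidiagonal p) (by simp [det_bidiagonal]),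
    bidiagonal_isUpperTriangular p, bidiagonal_apply_self p⟩

/-- The last nonzero coordinate of `v` is the coordinate `s`, and it equals `1`. -/
def EndsAt (v : Fin (n + 1) → R) (s : Fin (n + 1)) : Prop :=
  v s = 1 ∧ ∀ t, s < t → v t = 0

theorem EndsAt.succ {p q : Fin n → R} {v v' : Fin (n + 1) → R}
    (hvv' : v' ᵥ* bidiagonal q = v ᵥ* bidiagonal p) {j : Fin n} (hv : EndsAt v j.castSucc)
    (hp : p j = 1) (hq : q j = 0) (hq' : ∀ k : Fin n, (k : ℕ) = j + 1 → q k = 0) :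
    EndsAt v' j.succ := by
  have hcoord (i : Fin n) : v' i.succ + v' i.castSucc * q i = v i.succ + v i.castSucc * p i := by
    rw [← vecMul_bidiagonal_succ, ← vecMul_bidiagonal_succ, hvv']
  refine ⟨?_, fun t ht ↦ ?_⟩
  · simpa [hv.1, hp, hq, hv.2 _ Fin.castSucc_lt_succ] using hcoord j
  · induction t using Fin.induction with
    | zero => exact absurd ht (Fin.not_lt_zero _)
    | succ k ih =>
      have hjk : j < k := Fin.succ_lt_succ_iff.mp ht
      have hv'q : v' k.castSucc * q k = 0 := by
        rcases (Nat.succ_le_of_lt hjk).eq_or_lt with h | h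
        · rw [hq' k h.symm, mul_zero]
        · rw [ih h, zero_mul]
      have hk : v k.castSucc = 0 := hv.2 _ hjk
      have hk' : v k.succ = 0 := hv.2 _ (lt_trans (b := k.castSucc) hjk Fin.castSucc_lt_succ)
      simpa [hv'q, hk, hk'] using hcoord k

end Bidiagonal

section ResiduallyNilpotent

open Matrix

variable {α : Type*} [DecidableEq α] {R : Type*} [CommRing R]

variable (R) in
/-- The indicator function of the positions at which the letter `x` occurs in the word `w`. -/
def positionIndicator (w : List (α × Bool)) (x : α × Bool) :
    Fin w.length → R :=
  fun s ↦ if w[s] = x then 1 else 0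

variable (R) in
/-- The unitriangular representation of the free group adapted to the word `w`. The generator `i`
is sent to a quotient of two bidiagonal matrices, which encode the occurrences in `w` of `i` and
of its inverse. -/
noncomputable def wordRepresentation (w : List (α × Bool)) :
    FreeGroup α →* unitriangularGroup (Fin (w.length + 1)) R :=
  FreeGroup.lift fun i ↦ bidiagonalUnit (positionIndicator R w (i, true)) *
    (bidiagonalUnit (positionIndicator R w (i, false)))⁻¹

theorem wordRepresentation_letter_mul (w : List (α × Bool)) (x : α × Bool) :
    wordRepresentation R w (FreeGroup.mk [x]) *
      bidiagonalUnit (positionIndicator R w (x.1, !x.2)) =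
        bidiagonalUnit (positionIndicator R w x) := by
  obtain ⟨i, b⟩ := x
  cases b <;> simp [wordRepresentation, FreeGroup.lift_mk]

theorem endsAt_wordRepresentation_take {w : List (α × Bool)} (hw : FreeGroup.IsReduced w)
    (j : Fin (w.length + 1)) :
    EndsAt (Pi.single 0 1 ᵥ* (wordRepresentation R w (FreeGroup.mk (w.take j))).1.1) j := by
  induction j using Fin.induction with
  | zero => simp +contextual [← FreeGroup.one_eq_mk, EndsAt, Fin.pos_iff_ne_zero]
  | succ j ih =>
    have hletter : wordRepresentation R w (FreeGroup.mk (w.take j.succ)) *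
        bidiagonalUnit (positionIndicator R w (w[j].1, !w[j].2)) =
          wordRepresentation R w (FreeGroup.mk (w.take j)) *
            bidiagonalUnit (positionIndicator R w w[j]) := by
      rw [← wordRepresentation_letter_mul w w[j], ← mul_assoc, ← map_mul, FreeGroup.mul_mk,
        Fin.val_succ, List.take_succ_eq_append_getElem j.2]
      rfl
    refine EndsAt.succ (p := positionIndicator R w w[j])
      (q := positionIndicator R w (w[j].1, !w[j].2)) ?_ ih ?_ ?_ fun k hk ↦ ?_
    · exact vecMul_vecMul .. |>.trans (congrArg (fun A ↦ Pi.single 0 1 ᵥ* A.1.1) hletter) |>.trans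
        (vecMul_vecMul ..).symm
    · simp [positionIndicator]
    · simp [positionIndicator, Prod.ext_iff]
    · have hjk := List.isChain_iff_getElem.mp hw j (by omega)
      refine if_neg fun hwk ↦ ?_
      simp only [Fin.getElem_fin, hk] at hwk
      simp [hwk] at hjk

theorem wordRepresentation_mk_ne_one [Nontrivial R] {w : List (α × Bool)}
    (hw : FreeGroup.IsReduced w) (hne : w ≠ []) :
    wordRepresentation R w (FreeGroup.mk w) ≠ 1 := by
  intro h
  have hlast := (endsAt_wordRepresentation_take (R := R) hw (Fin.last _)).1
  rw [Fin.val_last, List.take_length, h] at hlast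
  simp [hne] at hlast

end ResiduallyNilpotent

theorem exists_isNilpotent_apply_ne_one {α : Type*} {g : FreeGroup α} (hg : g ≠ 1) :
    ∃ (P : Type) (_ : Group P) (_ : Group.IsNilpotent P) (f : FreeGroup α →* P), f g ≠ 1 := by
  classical
  refine ⟨unitriangularGroup (Fin (g.toWord.length + 1)) (ZMod 2), inferInstance,
    isNilpotent_unitriangularGroup_zmod 2, wordRepresentation (ZMod 2) g.toWord, ?_⟩
  have hne := wordRepresentation_mk_ne_one (R := ZMod 2) FreeGroup.isReduced_toWord
    (FreeGroup.toWord_eq_nil_iff.not.mpr hg)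
  rwa [FreeGroup.mk_toWord] at hne

theorem exists_isNilpotent_forall_apply_ne_one {α : Type*} {T : Set (FreeGroup α)} (hT : T.Finite)
    (h1 : 1 ∉ T) : ∃ (P : Type) (_ : Group P) (_ : Group.IsNilpotent P) (f : FreeGroup α →* P),
      ∀ g ∈ T, f g ≠ 1 := by
  induction T, hT using Set.Finite.induction_on with
  | empty => exact ⟨Unit, inferInstance, inferInstance, 1, by simp⟩
  | @insert g T _ _ ih =>
    rw [Set.mem_insert_iff, not_or] at h1
    obtain ⟨P, _, _, f, hf⟩ := exists_isNilpotent_apply_ne_one (Ne.symm h1.1)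
    obtain ⟨P', _, _, f', hf'⟩ := ih h1.2
    refine ⟨P × P', inferInstance, inferInstance, f.prod f', ?_⟩
    rintro h (rfl | hh)
    · exact fun heq ↦ hf (congrArg Prod.fst heq)
    · exact fun heq ↦ hf' h hh (congrArg Prod.snd heq)

theorem exists_isNilpotent_injOn {α : Type*} {S : Set (FreeGroup α)} (hS : S.Finite) :
    ∃ (P : Type) (_ : Group P) (_ : Group.IsNilpotent P) (f : FreeGroup α →* P),
      Set.InjOn f S := by
  obtain ⟨P, _, _, f, hf⟩ := exists_isNilpotent_forall_apply_ne_one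
    (T := (fun gh : FreeGroup α × FreeGroup α ↦ gh.1⁻¹ * gh.2) '' S.offDiag)
    (hS.offDiag.image _) (by simp +contextual [Set.mem_offDiag, inv_mul_eq_one])
  refine ⟨P, inferInstance, inferInstance, f, fun g hg h hh hgh ↦ ?_⟩
  by_contra hne
  exact hf _ ⟨(g, h), ⟨hg, hh, hne⟩, rfl⟩ (by simp [hgh])

section Growth

open scoped Pointwise

variable {m : ℕ} {G H : Type*} [Group G] [Group H] (σ : Fin m → G)

theorem wordEval_eq_lift (w : List (Fin m × Bool)) :
    wordEval σ w = FreeGroup.lift σ (FreeGroup.mk w) := by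
  simp only [wordEval, FreeGroup.lift_mk, Bool.cond_eq_ite]

theorem wordEval_cons (x : Fin m × Bool) (w : List (Fin m × Bool)) :
    wordEval σ (x :: w) = wordEval σ [x] * wordEval σ w := by
  simp [wordEval]

theorem wordEval_append (u w : List (Fin m × Bool)) :
    wordEval σ (u ++ w) = wordEval σ u * wordEval σ w := by
  simp [wordEval]

theorem map_wordEval (f : G →* H) (w : List (Fin m × Bool)) :
    f (wordEval σ w) = wordEval (f ∘ σ) w := by
  simp only [wordEval, map_list_prod, List.map_map]
  congr 2
  ext x
  simp only [Function.comp_apply]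
  split_ifs <;> simp

theorem exists_ball_subset_coe_pow [DecidableEq G] :
    ∃ S : Finset G, ∀ n, ball σ n ⊆ ↑(S ^ n) := by
  let S : Finset G := insert 1 (Finset.univ.image fun x ↦ wordEval σ [x])
  refine ⟨S, ?_⟩
  have hpow (w : List (Fin m × Bool)) : wordEval σ w ∈ S ^ w.length := by
    induction w with
    | nil => simp [wordEval]
    | cons x w ih =>
      rw [wordEval_cons, List.length_cons, pow_succ']
      exact Finset.mul_mem_mul (by simp [S]) ih
  rintro n _ ⟨w, hw, rfl⟩
  exact Finset.pow_subset_pow_right (Finset.mem_insert_self ..) hw (hpow w)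

theorem finite_ball (n : ℕ) : (ball σ n).Finite := by
  classical
  obtain ⟨S, hS⟩ := exists_ball_subset_coe_pow σ
  exact (Finset.finite_toSet _).subset (hS n)

theorem exists_ncard_ball_le_pow : ∃ c : ℕ, ∀ n, (ball σ n).ncard ≤ c ^ n := by
  classical
  obtain ⟨S, hS⟩ := exists_ball_subset_coe_pow σ
  refine ⟨S.card, fun n ↦ ?_⟩
  calc (ball σ n).ncard ≤ (S ^ n : Finset G).card :=
        (Set.ncard_le_ncard (hS n)).trans_eq (Set.ncard_coe_finset _)
    _ ≤ S.card ^ n := Finset.card_pow_le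

theorem isBoundedUnder_ncard_ball_rpow :
    IsBoundedUnder (· ≤ ·) atTop fun n : ℕ ↦ ((ball σ n).ncard : ℝ) ^ (1 / (n : ℝ)) := by
  obtain ⟨c, hc⟩ := exists_ncard_ball_le_pow σ
  refine isBoundedUnder_of_eventually_le (a := (c : ℝ)) ?_
  filter_upwards [eventually_ne_atTop 0] with n hn
  calc ((ball σ n).ncard : ℝ) ^ (1 / (n : ℝ)) ≤ ((c : ℝ) ^ n) ^ (1 / (n : ℝ)) := by
        gcongr; exact_mod_cast hc n
    _ = c := by rw [one_div, Real.pow_rpow_inv_natCast c.cast_nonneg hn]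

variable {σ}

theorem le_growthRate {r : ℝ} (hr : 0 ≤ r) {L s : ℕ} (hL : L ≠ 0) (hrs : r ^ L ≤ s)
    (hball : ∀ j, s ^ j ≤ (ball σ (j * L)).ncard) : r ≤ growthRate σ := by
  refine le_limsup_of_frequently_le ?_ (isBoundedUnder_ncard_ball_rpow σ)
  refine frequently_atTop.mpr fun j ↦
    ⟨(j + 1) * L, by nlinarith [Nat.pos_of_ne_zero hL], ?_⟩
  have hpow : r ^ ((j + 1) * L) ≤ (ball σ ((j + 1) * L)).ncard :=
    calc r ^ ((j + 1) * L) = (r ^ L) ^ (j + 1) := by rw [mul_comm, pow_mul]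
      _ ≤ (s : ℝ) ^ (j + 1) := by gcongr
      _ ≤ (ball σ ((j + 1) * L)).ncard := by exact_mod_cast hball (j + 1)
  calc r = (r ^ ((j + 1) * L)) ^ (1 / (((j + 1) * L : ℕ) : ℝ)) := by
        rw [one_div, Real.pow_rpow_inv_natCast hr (by positivity)]
    _ ≤ _ := by gcongr

theorem one_le_growthRate : 1 ≤ growthRate σ := by
  refine le_growthRate zero_le_one one_ne_zero (s := 1) (by simp) fun j ↦ ?_
  rw [one_pow, Nat.one_le_iff_ne_zero, ← Nat.pos_iff_ne_zero, Set.ncard_pos (finite_ball σ _)]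
  exact ⟨1, [], by simp, by simp [wordEval]⟩

/-- A set `S` of words is uniquely decodable for `σ` if a list of words from `S` is determined by
its length and by the value in the group of its concatenation. -/
def UniquelyDecodable (σ : Fin m → G) (S : Set (List (Fin m × Bool))) : Prop :=
  ∀ L L' : List (List (Fin m × Bool)), (∀ u ∈ L, u ∈ S) → (∀ u ∈ L', u ∈ S) →
    L.length = L'.length → wordEval σ L.flatten = wordEval σ L'.flatten → L = L'

theorem UniquelyDecodable.of_comp (f : G →* H) {S : Set (List (Fin m × Bool))}
    (hS : UniquelyDecodable (f ∘ σ) S) : UniquelyDecodable σ S := fun L L' hL hL' hlen heq ↦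
  hS L L' hL hL' hlen (by rw [← map_wordEval, ← map_wordEval, heq])

theorem UniquelyDecodable.card_pow_le_ncard_ball {S : Finset (List (Fin m × Bool))} {N : ℕ}
    (hS : UniquelyDecodable σ (S : Set (List (Fin m × Bool)))) (hlen : ∀ u ∈ S, u.length ≤ N)
    (j : ℕ) : S.card ^ j ≤ (ball σ (j * N)).ncard := by
  let eval (c : Fin j → S) : G := wordEval σ (List.ofFn fun i ↦ (c i).1).flatten
  have hinj : Function.Injective eval := fun c c' heq ↦ by
    have := hS _ _ (by simp [List.mem_ofFn]) (by simp [List.mem_ofFn]) (by simp) heq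
    exact funext fun i ↦ Subtype.ext (congrFun (List.ofFn_injective this) i)
  have hball : Set.range eval ⊆ ball σ (j * N) := by
    rintro _ ⟨c, rfl⟩
    refine ⟨_, ?_, rfl⟩
    rw [List.length_flatten]
    refine (List.sum_le_card_nsmul _ N ?_).trans (by simp)
    simp only [List.mem_map, List.mem_ofFn]
    rintro _ ⟨_, ⟨i, rfl⟩, rfl⟩
    exact hlen _ (c i).2
  calc S.card ^ j = (Set.range eval).ncard := by
        rw [← Set.image_univ, Set.ncard_image_of_injective _ hinj, Set.ncard_univ]; simp
    _ ≤ (ball σ (j * N)).ncard := Set.ncard_le_ncard hball (finite_ball σ _)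

theorem UniquelyDecodable.le_growthRate {S : Finset (List (Fin m × Bool))} {N : ℕ} {r : ℝ}
    (hS : UniquelyDecodable σ (S : Set (List (Fin m × Bool)))) (hlen : ∀ u ∈ S, u.length ≤ N)
    (hN : N ≠ 0) (hr : 0 ≤ r) (hcard : r ^ N ≤ S.card) : r ≤ growthRate σ :=
  _root_.le_growthRate hr hN hcard (hS.card_pow_le_ncard_ball hlen)

end Growth

section Height

variable {α : Type*} [DecidableEq α] {a : α}

/-- The exponent with which a letter contributes to the exponent sum of the generator `a`. -/
def letterHeight (a : α) (x : α × Bool) : ℤ :=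
  if x.1 = a then (if x.2 then 1 else -1) else 0

/-- The height of a word is its exponent sum in the generator `a`. -/
def height (a : α) (w : List (α × Bool)) : ℤ :=
  (w.map (letterHeight a)).sum

@[simp]
theorem height_nil : height a [] = 0 := rfl

@[simp]
theorem height_cons (x : α × Bool) (w : List (α × Bool)) :
    height a (x :: w) = letterHeight a x + height a w := by
  simp [height]

@[simp]
theorem height_append (u w : List (α × Bool)) :
    height a (u ++ w) = height a u + height a w := by
  simp [height]

theorem abs_letterHeight_le (x : α × Bool) : |letterHeight a x| ≤ 1 := by
  unfold letterHeight
  split_ifs <;> simp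

theorem abs_height_le_length (w : List (α × Bool)) : |height a w| ≤ w.length := by
  induction w with
  | nil => simp
  | cons x w ih =>
    rw [height_cons, List.length_cons]
    have := abs_letterHeight_le (a := a) x
    grind [abs_add_le (letterHeight a x) (height a w)]

/-- The path of heights traced by the prefixes of `w` stays inside `I`. -/
def HeightsIn (a : α) (I : Set ℤ) (w : List (α × Bool)) : Prop :=
  ∀ u, u <+: w → height a u ∈ I

theorem HeightsIn.height_mem {I : Set ℤ} {w : List (α × Bool)} (hw : HeightsIn a I w) :
    height a w ∈ I :=
  hw w (List.prefix_refl w)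

theorem HeightsIn.of_prefix {I : Set ℤ} {u w : List (α × Bool)} (hw : HeightsIn a I w)
    (h : u <+: w) : HeightsIn a I u :=
  fun v hv ↦ hw v (hv.trans h)

theorem HeightsIn.mono {I J : Set ℤ} {w : List (α × Bool)} (hw : HeightsIn a I w) (hIJ : I ⊆ J) :
    HeightsIn a J w :=
  fun u hu ↦ hIJ (hw u hu)

theorem HeightsIn.append {I J : Set ℤ} {u w : List (α × Bool)} (hu : HeightsIn a I u)
    (hw : HeightsIn a J w) (h : ∀ k ∈ J, height a u + k ∈ I) : HeightsIn a I (u ++ w) := by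
  intro v hv
  obtain hvu | ⟨v, rfl⟩ := List.prefix_or_prefix_of_prefix hv (List.prefix_append u w)
  · exact hu v hvu
  · rw [height_append]
    exact h _ (hw v ((List.prefix_append_right_inj u).mp hv))

theorem HeightsIn.cons {I J : Set ℤ} {x : α × Bool} {w : List (α × Bool)} (h0 : 0 ∈ I)
    (hw : HeightsIn a J w) (h : ∀ k ∈ J, letterHeight a x + k ∈ I) : HeightsIn a I (x :: w) := by
  intro v hv
  obtain rfl | ⟨v, rfl, hvw⟩ := List.prefix_cons_iff.mp hv
  · exact h0
  · rw [height_cons]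
    exact h _ (hw v hvw)

theorem heightsIn_nil {I : Set ℤ} : HeightsIn a I [] ↔ 0 ∈ I := by
  simp [HeightsIn]

theorem heightsIn_Icc_length (w : List (α × Bool)) :
    HeightsIn a (Set.Icc (-w.length) w.length) w := fun u hu ↦
  abs_le.mp <| (abs_height_le_length u).trans <| by exact_mod_cast hu.length_le

/-- A word is rising if it starts with the letter `a` and never again visits height `0`. -/
def Rising (a : α) (w : List (α × Bool)) : Prop :=
  ∃ g, w = (a, true) :: g ∧ HeightsIn a (Set.Ici 0) g

theorem Rising.heightsIn {w : List (α × Bool)} (hw : Rising a w) :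
    HeightsIn a (Set.Ici 0) w := by
  obtain ⟨g, rfl, hg⟩ := hw
  refine hg.cons (Set.self_mem_Ici) fun k hk ↦ ?_
  simp only [letterHeight, Set.mem_Ici, if_true] at hk ⊢
  omega

theorem Rising.append {u w : List (α × Bool)} (hu : Rising a u) (hw : HeightsIn a (Set.Ici 0) w) :
    Rising a (u ++ w) := by
  obtain ⟨g, rfl, hg⟩ := hu
  exact ⟨g ++ w, rfl, hg.append hw fun _ hk ↦ Set.mem_Ici.mpr (add_nonneg hg.height_mem hk)⟩

/-- A block of height `h`: a word that climbs from height `0` to height `h`, leaves height `0`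
immediately and for good, and never exceeds `h`. -/
structure IsBlock (a : α) (h : ℤ) (u : List (α × Bool)) : Prop where
  rising : Rising a u
  height_eq : height a u = h
  heightsIn : HeightsIn a (Set.Iic h) u

end Height

section Lamplighter

open Multiplicative (ofAdd)

variable {m : ℕ} {D Q : Type*} [Group D] [Group Q] {a : Fin m} {s : D}
  {ν : Fin m → Q} {φ : Q →* Multiplicative ℤ}

theorem map_wordEval_eq_ofAdd_height (hφ : ∀ i, φ (ν i) = ofAdd (if i = a then (1 : ℤ) else 0))
    (w : List (Fin m × Bool)) : φ (wordEval ν w) = ofAdd (height a w) := by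
  induction w with
  | nil => simp [wordEval]
  | cons x w ih =>
    rw [wordEval_cons, map_mul, ih, height_cons, ofAdd_add]
    congr 1
    obtain ⟨i, b⟩ := x
    cases b <;> by_cases hi : i = a <;> simp [wordEval, letterHeight, hφ, hi]

variable [DecidableEq Q]

/-- The generators `ν i` of `Q` lifted to the wreath product of `D` and `Q` in such a way that the
generator indexed by `a` also switches the lamp at the current position by `s`. -/
def lampGenerator (a : Fin m) (s : D) (ν : Fin m → Q) (i : Fin m) : D ≀ᵣ Q :=
  ⟨if i = a then Pi.mulSingle 1 s else 1, ν i⟩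

theorem right_wordEval_lampGenerator (w : List (Fin m × Bool)) :
    (wordEval (lampGenerator a s ν) w).right = wordEval ν w :=
  map_wordEval (lampGenerator a s ν) RegularWreathProduct.rightHom w

theorem left_wordEval_append (u w : List (Fin m × Bool)) (y : Q) :
    (wordEval (lampGenerator a s ν) (u ++ w)).left y = (wordEval (lampGenerator a s ν) u).left y *
      (wordEval (lampGenerator a s ν) w).left ((wordEval ν u)⁻¹ * y) := by
  rw [wordEval_append, RegularWreathProduct.mul_left,
    right_wordEval_lampGenerator, Pi.mul_apply]

theorem left_wordEval_singleton_eq_one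
    (hφ : ∀ i, φ (ν i) = ofAdd (if i = a then (1 : ℤ) else 0)) {x : Fin m × Bool} {y : Q} {k : ℤ}
    (hy : φ y = ofAdd k) (hpos : x = (a, true) → k ≠ 0) (hneg : x = (a, false) → k ≠ -1) :
    (wordEval (lampGenerator a s ν) [x]).left y = 1 := by
  have lamp_eq_one {z : Q} {l : ℤ} (hz : φ z = ofAdd l) (hl : l ≠ 0) :
      (Pi.mulSingle 1 s : Q → D) z = 1 := by
    refine Pi.mulSingle_eq_of_ne (M := fun _ ↦ D) ?_ s
    rintro rfl
    exact hl (by simpa using hz.symm)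
  obtain ⟨i, b⟩ := x
  by_cases hi : i = a
  · subst hi
    cases b
    · suffices (Pi.mulSingle 1 s : Q → D) (ν i * y) = 1 by
        simpa [wordEval, lampGenerator] using this
      refine lamp_eq_one (l := 1 + k) (by simp [hφ, hy, ofAdd_add]) ?_
      have := hneg rfl
      omega
    · simpa [wordEval, lampGenerator] using lamp_eq_one hy (hpos rfl)
  · cases b <;> simp [wordEval, lampGenerator, hi]

/-- The lamps at level `k` can only be switched by moving between the levels `k` and `k + 1`. -/
theorem left_wordEval_eq_one (hφ : ∀ i, φ (ν i) = ofAdd (if i = a then (1 : ℤ) else 0))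
    {I : Set ℤ} {w : List (Fin m × Bool)} (hw : HeightsIn a I w) {y : Q} {k : ℤ}
    (hy : φ y = ofAdd k) (hk : k ∈ I → k + 1 ∉ I) :
    (wordEval (lampGenerator a s ν) w).left y = 1 := by
  induction w using List.reverseRecOn with
  | nil => simp [wordEval]
  | append_singleton w x ih =>
    have hpre := hw.of_prefix (List.prefix_append w [x])
    have hlast := hw.height_mem
    rw [left_wordEval_append, ih hpre, one_mul]
    refine left_wordEval_singleton_eq_one hφ (k := k - height a w) ?_ ?_ ?_
    · rw [map_mul, map_inv, map_wordEval_eq_ofAdd_height hφ, hy, ← ofAdd_neg, ← ofAdd_add]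
      congr 1
      ring
    · rintro rfl h
      obtain rfl : k = height a w := by omega
      exact hk hpre.height_mem (by simpa [letterHeight] using hlast)
    · rintro rfl h
      obtain rfl : k = height a w - 1 := by omega
      exact hk (by simpa [letterHeight, sub_eq_add_neg] using hlast)
        (by simpa using hpre.height_mem)

theorem Rising.left_wordEval (hφ : ∀ i, φ (ν i) = ofAdd (if i = a then (1 : ℤ) else 0))
    {w : List (Fin m × Bool)} (hw : Rising a w) {y : Q} (hy : φ y = 1) :
    (wordEval (lampGenerator a s ν) w).left y = (Pi.mulSingle 1 s : Q → D) y := by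
  obtain ⟨g, rfl, hg⟩ := hw
  rw [← List.singleton_append, left_wordEval_append, left_wordEval_eq_one hφ hg (k := -1),
    mul_one]
  · simp [wordEval, lampGenerator]
  · rw [map_mul, map_inv, map_wordEval_eq_ofAdd_height hφ, hy]
    simp [letterHeight]
  · simp

theorem IsBlock.left_wordEval_append (hφ : ∀ i, φ (ν i) = ofAdd (if i = a then (1 : ℤ) else 0))
    {h : ℤ} {u w : List (Fin m × Bool)} (hu : IsBlock a h u) (hw : Rising a w) {y : Q}
    (hy : φ y = ofAdd h) :
    (wordEval (lampGenerator a s ν) (u ++ w)).left y =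
      (Pi.mulSingle (wordEval ν u) s : Q → D) y := by
  rw [_root_.left_wordEval_append, left_wordEval_eq_one hφ hu.heightsIn hy (by simp), one_mul,
    hw.left_wordEval hφ]
  · simp [Pi.mulSingle_apply, inv_mul_eq_one, eq_comm]
  · rw [map_mul, map_inv, map_wordEval_eq_ofAdd_height hφ, hu.height_eq, hy, inv_mul_cancel]

theorem IsBlock.wordEval_eq_of_append (hφ : ∀ i, φ (ν i) = ofAdd (if i = a then (1 : ℤ) else 0))
    (hs : s ≠ 1) {h : ℤ} {u u' w w' : List (Fin m × Bool)} (hu : IsBlock a h u)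
    (hu' : IsBlock a h u') (hw : Rising a w) (hw' : Rising a w')
    (heq : wordEval (lampGenerator a s ν) (u ++ w) = wordEval (lampGenerator a s ν) (u' ++ w')) :
    wordEval ν u = wordEval ν u' := by
  have hy : φ (wordEval ν u) = ofAdd h := by
    rw [map_wordEval_eq_ofAdd_height hφ, hu.height_eq]
  have hlamp := hu.left_wordEval_append (s := s) hφ hw hy
  rw [heq, hu'.left_wordEval_append hφ hw' hy, Pi.mulSingle_eq_same] at hlamp
  by_contra hne
  exact hs (by rw [← hlamp, Pi.mulSingle_eq_of_ne hne])

theorem rising_flatten_append {h : ℤ} {L : List (List (Fin m × Bool))}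
    (hL : ∀ u ∈ L, IsBlock a h u) : Rising a (L.flatten ++ [(a, true)]) := by
  induction L with
  | nil => exact ⟨[], rfl, by simp [heightsIn_nil]⟩
  | cons u L ih =>
    simp only [List.forall_mem_cons] at hL
    rw [List.flatten_cons, List.append_assoc]
    exact hL.1.rising.append (ih hL.2).heightsIn

/-- The lamp lit at the end of a block is out of reach for all later blocks, so the final state of
the lamps reveals the blocks one after the other. -/
theorem uniquelyDecodable_lampGenerator
    (hφ : ∀ i, φ (ν i) = ofAdd (if i = a then (1 : ℤ) else 0)) (hs : s ≠ 1) {h : ℤ}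
    {S : Set (List (Fin m × Bool))} (hS : ∀ u ∈ S, IsBlock a h u)
    (hinj : Set.InjOn (wordEval ν) S) : UniquelyDecodable (lampGenerator a s ν) S := by
  intro L L' hL hL' hlen heq
  -- The additional letter makes every tail rising, even the empty one.
  replace heq : wordEval (lampGenerator a s ν) (L.flatten ++ [(a, true)]) =
      wordEval (lampGenerator a s ν) (L'.flatten ++ [(a, true)]) := by
    rw [wordEval_append, wordEval_append, heq]
  induction L generalizing L' with
  | nil => exact (List.eq_nil_of_length_eq_zero hlen.symm).symm
  | cons u L ih =>
    obtain _ | ⟨u', L'⟩ := L'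
    · simp at hlen
    simp only [List.forall_mem_cons] at hL hL'
    simp only [List.flatten_cons, List.append_assoc] at heq
    obtain rfl : u = u' := hinj hL.1 hL'.1 <|
      (hS u hL.1).wordEval_eq_of_append hφ hs (hS u' hL'.1)
        (rising_flatten_append fun v hv ↦ hS v (hL.2 v hv))
        (rising_flatten_append fun v hv ↦ hS v (hL'.2 v hv)) heq
    rw [wordEval_append _ u, wordEval_append _ u] at heq
    rw [ih L' hL.2 hL'.2 (by simpa using hlen) (mul_left_cancel heq)]

end Lamplighter

section Construction

theorem isAbelianByNilpotent_of_ker {G N : Type*} [Group G] [Group N] [Group.IsNilpotent N]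
    (f : G →* N) (hf : ∀ x ∈ f.ker, ∀ y ∈ f.ker, x * y = y * x) : IsAbelianByNilpotent G :=
  ⟨f.ker, inferInstance, hf,
    Group.nilpotent_of_mulEquiv (QuotientGroup.quotientKerEquivRange f).symm⟩

theorem isAbelianByNilpotent_subgroup_wreath {D Q : Type*} [CommGroup D] [Group Q]
    [Group.IsNilpotent Q] (K : Subgroup (D ≀ᵣ Q)) : IsAbelianByNilpotent K := by
  refine isAbelianByNilpotent_of_ker (RegularWreathProduct.rightHom.comp K.subtype) ?_
  intro x hx y hy
  have hx : x.1.right = 1 := hx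
  have hy : y.1.right = 1 := hy
  ext z <;> simp [hx, hy, mul_comm]

theorem exists_isNilpotent_injOn_wordEval {m : ℕ} {S : Set (List (Fin m × Bool))}
    (hS : S.Finite) (hred : ∀ u ∈ S, FreeGroup.IsReduced u) :
    ∃ (P : Type) (_ : Group P) (_ : Group.IsNilpotent P) (τ : Fin m → P),
      Set.InjOn (wordEval τ) S := by
  obtain ⟨P, _, hP, f, hf⟩ := exists_isNilpotent_injOn (hS.image FreeGroup.mk)
  refine ⟨P, _, hP, f ∘ FreeGroup.of, fun u hu v hv huv ↦ ?_⟩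
  have heval (w : List (Fin m × Bool)) : wordEval (f ∘ FreeGroup.of) w = f (FreeGroup.mk w) := by
    rw [wordEval_eq_lift]
    exact DFunLike.congr_fun (FreeGroup.lift.apply_symm_apply f) _
  have hmk := hf ⟨u, hu, rfl⟩ ⟨v, hv, rfl⟩ (by rw [← heval, ← heval, huv])
  rw [← (hred u hu).reduce_eq, ← (hred v hv).reduce_eq, ← FreeGroup.toWord_mk, hmk,
    FreeGroup.toWord_mk]

theorem exists_isAbelianByNilpotent_of_isBlock {m : ℕ} {a : Fin m} {h : ℤ}
    {S : Finset (List (Fin m × Bool))} (hS : ∀ u ∈ S, IsBlock a h u)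
    (hred : ∀ u ∈ S, FreeGroup.IsReduced u) {N : ℕ} (hN : N ≠ 0) (hlen : ∀ u ∈ S, u.length ≤ N)
    {r : ℝ} (hr : 0 ≤ r) (hcard : r ^ N ≤ S.card) :
    ∃ (G : Type) (_ : Group G) (σ : Fin m → G),
      Subgroup.closure (Set.range σ) = ⊤ ∧ IsAbelianByNilpotent G ∧ r ≤ growthRate σ := by
  classical
  obtain ⟨P, _, _, τ, hτ⟩ := exists_isNilpotent_injOn_wordEval S.finite_toSet hred
  let ν (i : Fin m) : P × Multiplicative ℤ := (τ i, Multiplicative.ofAdd (if i = a then 1 else 0))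
  have hν : Set.InjOn (wordEval ν) S := fun u hu v hv huv ↦ hτ hu hv <| by
    have hfst := congrArg (MonoidHom.fst P (Multiplicative ℤ)) huv
    rwa [map_wordEval, map_wordEval] at hfst
  let σ := lampGenerator a (Multiplicative.ofAdd (1 : ℤ)) ν
  have hσ : UniquelyDecodable σ (S : Set (List (Fin m × Bool))) :=
    uniquelyDecodable_lampGenerator (φ := MonoidHom.snd P (Multiplicative ℤ)) (fun _ ↦ rfl)
      (by decide) hS hν
  let G := Subgroup.closure (Set.range σ)
  let σG (i : Fin m) : G := ⟨σ i, Subgroup.subset_closure ⟨i, rfl⟩⟩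
  have hrange : Set.range σG = (↑) ⁻¹' Set.range σ := by
    ext ⟨x, hx⟩
    simp [σG]
  refine ⟨G, inferInstance, σG, ?_, isAbelianByNilpotent_subgroup_wreath G, ?_⟩
  · rw [hrange, Subgroup.closure_closure_coe_preimage]
  · exact (hσ.of_comp (σ := σG) G.subtype).le_growthRate hlen hN hr hcard

end Construction

section ReducedWords

variable {α : Type*} {x : α × Bool}

theorem snd_eq_of_fst_eq_iff {x y : α × Bool} : (x.1 = y.1 → x.2 = y.2) ↔ y ≠ (x.1, !x.2) := by
  obtain ⟨i, b⟩ := x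
  obtain ⟨j, c⟩ := y
  cases b <;> cases c <;> simp [eq_comm]

/-- The words of length `q` which can follow the letter `x` in a reduced word. -/
def reducedExtensions [Fintype α] [DecidableEq α] : ℕ → α × Bool → Finset (List (α × Bool))
  | 0, _ => {[]}
  | q + 1, x => ((Finset.univ.erase (x.1, !x.2)).sigma (reducedExtensions q)).image
      fun p ↦ p.1 :: p.2

theorem mem_reducedExtensions [Fintype α] [DecidableEq α] {q : ℕ} {w : List (α × Bool)} :
    w ∈ reducedExtensions q x ↔ w.length = q ∧ FreeGroup.IsReduced (x :: w) := by
  induction q generalizing x w with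
  | zero => simp +contextual [reducedExtensions, List.length_eq_zero_iff]
  | succ q ih =>
    cases w with
    | nil => simp [reducedExtensions]
    | cons y w =>
      rw [FreeGroup.isReduced_cons_cons, snd_eq_of_fst_eq_iff]
      simp [reducedExtensions, ih, and_left_comm]

theorem card_reducedExtensions [Fintype α] [DecidableEq α] (q : ℕ) (x : α × Bool) :
    (reducedExtensions q x).card = (2 * Fintype.card α - 1) ^ q := by
  induction q generalizing x with
  | zero => rfl
  | succ q ih =>
    rw [reducedExtensions, Finset.card_image_of_injective _ fun p p' h ↦ by
      obtain ⟨_, _⟩ := p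
      obtain ⟨_, _⟩ := p'
      simpa using h]
    simp [ih, pow_succ', mul_comm]

/-- A reduced loop at the letter `x`: a word `t` such that `x :: t` is reduced and ends in `x`.
Reduced loops can be inserted after any occurrence of `x` in a reduced word. -/
structure IsReducedLoop (x : α × Bool) (t : List (α × Bool)) : Prop where
  isReduced : FreeGroup.IsReduced (x :: t)
  suffix : [x] <:+ x :: t

theorem isReducedLoop_nil : IsReducedLoop x [] :=
  ⟨FreeGroup.IsReduced.singleton, List.suffix_rfl⟩

theorem IsReducedLoop.isReduced_append {t w : List (α × Bool)} (ht : IsReducedLoop x t)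
    (hw : FreeGroup.IsReduced (x :: w)) : FreeGroup.IsReduced (x :: t ++ w) := by
  obtain ⟨p, hp⟩ := ht.suffix
  rw [← hp]
  exact FreeGroup.IsReduced.append_overlap (hp ▸ ht.isReduced) hw (List.cons_ne_nil _ _)

theorem IsReducedLoop.append {t t' : List (α × Bool)} (ht : IsReducedLoop x t)
    (ht' : IsReducedLoop x t') : IsReducedLoop x (t ++ t') := by
  refine ⟨ht.isReduced_append ht'.isReduced, ht'.suffix.trans ?_⟩
  obtain ⟨p, hp⟩ := ht.suffix
  exact ⟨p, by rw [← List.cons_append, ← hp, List.append_assoc, List.singleton_append]⟩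

theorem IsReducedLoop.flatten {L : List (List (α × Bool))} (hL : ∀ t ∈ L, IsReducedLoop x t) :
    IsReducedLoop x L.flatten := by
  induction L with
  | nil => exact isReducedLoop_nil
  | cons t L ih =>
    rw [List.forall_mem_cons] at hL
    exact hL.1.append (ih hL.2)

theorem exists_isReducedLoop_append [Nontrivial α] {w : List (α × Bool)}
    (hw : FreeGroup.IsReduced (x :: w)) : ∃ e, IsReducedLoop x (w ++ [e, x]) := by
  obtain ⟨p, z, hpz⟩ := (List.eq_nil_or_concat' (x :: w)).resolve_left (List.cons_ne_nil _ _)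
  obtain ⟨e, hze, hex⟩ : ∃ e : α × Bool, (z.1 = e.1 → z.2 = e.2) ∧ (e.1 = x.1 → e.2 = x.2) := by
    by_cases hzx : z.1 = x.1
    · obtain ⟨i, hi⟩ := exists_ne x.1
      exact ⟨(i, true), fun h ↦ absurd (h.symm.trans hzx) hi, fun h ↦ absurd h hi⟩
    · exact ⟨x, fun h ↦ absurd h hzx, fun _ ↦ rfl⟩
  refine ⟨e, ?_, ⟨x :: w ++ [e], by simp⟩⟩
  rw [← List.cons_append, hpz]
  refine FreeGroup.IsReduced.append_overlap (hpz ▸ hw) ?_ (List.cons_ne_nil _ _)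
  simpa using ⟨hze, hex⟩

theorem exists_finset_isReducedLoop [Fintype α] [Nontrivial α] (x : α × Bool) (q : ℕ) :
    ∃ T : Finset (List (α × Bool)), T.card = (2 * Fintype.card α - 1) ^ q ∧
      ∀ t ∈ T, t.length = q + 2 ∧ IsReducedLoop x t := by
  classical
  choose e he using fun w : {w // w ∈ reducedExtensions q x} ↦
    exists_isReducedLoop_append (mem_reducedExtensions.mp w.2).2
  let close (w : {w // w ∈ reducedExtensions q x}) : List (α × Bool) :=
    w.1 ++ [e w, x]
  have hclose : Function.Injective close := fun w w' h ↦ Subtype.ext <|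
    (List.append_inj h <| by
      rw [(mem_reducedExtensions.mp w.2).1, (mem_reducedExtensions.mp w'.2).1]).1
  refine ⟨(reducedExtensions q x).attach.image close, ?_, ?_⟩
  · rw [Finset.card_image_of_injective _ hclose, Finset.card_attach, card_reducedExtensions]
  · simp only [Finset.mem_image, Finset.mem_attach, true_and, forall_exists_index,
      forall_apply_eq_imp_iff]
    exact fun w ↦ ⟨by simp [close, (mem_reducedExtensions.mp w.2).1], he w⟩

end ReducedWords

section Inversion

variable {α : Type*} [DecidableEq α] {a : α}

/-- The automorphism of the free group inverting the generator `a`, as a map of letters. -/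
def invertLetter (a : α) (x : α × Bool) : α × Bool :=
  if x.1 = a then (x.1, !x.2) else x

theorem invertLetter_involutive : Function.Involutive (invertLetter a) := by
  rintro ⟨i, b⟩
  by_cases h : i = a <;> simp [invertLetter, h]

theorem invertLetter_of_ne {x : α × Bool} (hx : x.1 ≠ a) : invertLetter a x = x :=
  if_neg hx

theorem letterHeight_invertLetter (x : α × Bool) :
    letterHeight a (invertLetter a x) = -letterHeight a x := by
  obtain ⟨i, b⟩ := x
  by_cases h : i = a <;> cases b <;> simp [invertLetter, letterHeight, h]

theorem height_map_invertLetter (w : List (α × Bool)) :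
    height a (w.map (invertLetter a)) = -height a w := by
  induction w with
  | nil => simp
  | cons x w ih =>
    rw [List.map_cons, height_cons, height_cons, letterHeight_invertLetter, ih, neg_add]

theorem isReduced_map_invertLetter {w : List (α × Bool)} (hw : FreeGroup.IsReduced w) :
    FreeGroup.IsReduced (w.map (invertLetter a)) := by
  refine (List.isChain_map _).mpr (hw.imp ?_)
  rintro ⟨i, b⟩ ⟨j, c⟩ h
  by_cases hi : i = a <;> by_cases hj : j = a <;> simp_all [invertLetter]

theorem IsReducedLoop.map_invertLetter {x : α × Bool} {t : List (α × Bool)} (ht : IsReducedLoop x t)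
    (hx : x.1 ≠ a) : IsReducedLoop x (t.map (invertLetter a)) := by
  have hmap : x :: t.map (invertLetter a) = (x :: t).map (invertLetter a) := by
    rw [List.map_cons, invertLetter_of_ne hx]
  constructor
  · rw [hmap]
    exact isReduced_map_invertLetter ht.isReduced
  · rw [hmap]
    simpa [invertLetter_of_ne hx] using ht.suffix.map (invertLetter a)

theorem exists_card_le_card_filter_height_mul (a : α) {T : Finset (List (α × Bool))} {N : ℕ}
    (hT : ∀ t ∈ T, t.length ≤ N) :
    ∃ z, T.card ≤ (T.filter (height a · = z)).card * (2 * N + 1) := by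
  obtain ⟨z, -, hz⟩ := (Finset.Icc (-N : ℤ) N).exists_max_image
    (fun z ↦ (T.filter (height a · = z)).card) ⟨0, by simp⟩
  refine ⟨z, (Finset.card_le_mul_card_image_of_maps_to (fun t ht ↦ ?_) _ hz).trans_eq ?_⟩
  · rw [Finset.mem_Icc, ← abs_le]
    exact (abs_height_le_length t).trans (by exact_mod_cast hT t ht)
  · rw [Int.card_Icc]
    congr 1
    omega

/-- Loops `t` and `t'` of equal height combine to the loop `t ++ t'.map (invertLetter a)` of
height `0`. -/
theorem exists_finset_isReducedLoop_height_eq_zero [Fintype α] [Nontrivial α] {x : α × Bool}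
    (hx : x.1 ≠ a) (q : ℕ) : ∃ (D : Finset (List (α × Bool))) (c : ℕ), D.card = c ^ 2 ∧
      (2 * Fintype.card α - 1) ^ q ≤ c * (2 * (q + 2) + 1) ∧
      ∀ d ∈ D, d.length = (q + 2) * 2 ∧ IsReducedLoop x d ∧ height a d = 0 := by
  obtain ⟨T, hcard, hT⟩ := exists_finset_isReducedLoop x q
  obtain ⟨z, hz⟩ := exists_card_le_card_filter_height_mul a fun t ht ↦ (hT t ht).1.le
  set U := T.filter (height a · = z)
  have hU {t} (ht : t ∈ U) : t ∈ T ∧ height a t = z := Finset.mem_filter.mp ht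
  refine ⟨Finset.image₂ (fun t t' ↦ t ++ t'.map (invertLetter a)) U U, U.card, ?_, hcard ▸ hz, ?_⟩
  · rw [sq, Finset.card_image₂_iff]
    rintro ⟨t, t'⟩ ⟨ht, -⟩ ⟨s, s'⟩ ⟨hs, -⟩ h
    obtain ⟨rfl, h⟩ := List.append_inj h ((hT t (hU ht).1).1.trans (hT s (hU hs).1).1.symm)
    exact Prod.ext rfl (List.map_injective_iff.mpr invertLetter_involutive.injective h)
  · rintro d hd
    obtain ⟨t, ht, t', ht', rfl⟩ := Finset.mem_image₂.mp hd
    obtain ⟨htT, hz⟩ := hU ht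
    obtain ⟨htT', hz'⟩ := hU ht'
    refine ⟨?_, (hT t htT).2.append ((hT t' htT').2.map_invertLetter hx), ?_⟩
    · rw [List.length_append, List.length_map, (hT t htT).1, (hT t' htT').1, mul_two]
    · rw [height_append, height_map_invertLetter, hz, hz', add_neg_cancel]

end Inversion

section Blocks

variable {α : Type*} {a : α} {x : α × Bool}

/-- The word `a ^ (N + 1) * x * c * a ^ (N + 1)`, which is a block if `c` is a word of height `0`
all of whose heights have absolute value at most `N`. -/
def blockWord (a : α) (x : α × Bool) (N : ℕ) (c : List (α × Bool)) : List (α × Bool) :=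
  List.replicate (N + 1) (a, true) ++ (x :: c ++ List.replicate (N + 1) (a, true))

theorem length_blockWord (N : ℕ) (c : List (α × Bool)) :
    (blockWord a x N c).length = c.length + (2 * N + 3) := by
  simp only [blockWord, List.length_append, List.length_replicate, List.length_cons]
  ring

theorem blockWord_injective (a : α) (x : α × Bool) (N : ℕ) :
    Function.Injective (blockWord a x N) := fun c c' h ↦ by simpa [blockWord] using h

theorem isReduced_blockWord (hx : x.1 ≠ a) {c : List (α × Bool)} (hc : IsReducedLoop x c) (N : ℕ) :
    FreeGroup.IsReduced (blockWord a x N c) := by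
  have hrep : FreeGroup.IsReduced (List.replicate (N + 1) (a, true)) :=
    List.isChain_replicate_of_rel _ fun _ ↦ rfl
  have hleft : FreeGroup.IsReduced (List.replicate (N + 1) (a, true) ++ [x]) := by
    refine List.isChain_append.mpr ⟨hrep, List.isChain_singleton _, ?_⟩
    simp [List.getLast?_replicate, hx.symm]
  have hright : FreeGroup.IsReduced (x :: List.replicate (N + 1) (a, true)) := by
    rw [List.replicate_succ, FreeGroup.isReduced_cons_cons, ← List.replicate_succ]
    exact ⟨fun h ↦ absurd h hx, hrep⟩
  have := FreeGroup.IsReduced.append_overlap hleft (hc.isReduced_append hright)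
    (List.cons_ne_nil _ _)
  simpa [blockWord] using this

variable [DecidableEq α]

theorem height_replicate (n : ℕ) : height a (List.replicate n (a, true)) = n := by
  simp [height, letterHeight]

theorem heightsIn_replicate (n : ℕ) :
    HeightsIn a (Set.Icc 0 n) (List.replicate n (a, true)) := by
  intro u hu
  obtain ⟨hn, hu⟩ := List.prefix_replicate_iff.mp hu
  rw [hu, height_replicate]
  simpa using hn

theorem isBlock_blockWord (hx : x.1 ≠ a) {c : List (α × Bool)} {N : ℕ} (hc : height a c = 0)
    (hcN : HeightsIn a (Set.Icc (-N) N) c) : IsBlock a (2 * N + 2) (blockWord a x N c) := by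
  have hx0 : letterHeight a x = 0 := if_neg hx
  have ha1 : letterHeight a (a, true) = 1 := by simp [letterHeight]
  have hxc : HeightsIn a (Set.Icc (-N) N) (x :: c) := hcN.cons (by simp) (by simp [hx0])
  have hmid : HeightsIn a (Set.Icc (-N) (N + 1)) (x :: c ++ List.replicate (N + 1) (a, true)) := by
    refine (hxc.mono ?_).append (heightsIn_replicate _) ?_
    · exact Set.Icc_subset_Icc_right (by omega)
    · simp only [height_cons, hx0, hc, Set.mem_Icc]
      push_cast
      intros
      omega
  have htail : HeightsIn a (Set.Icc 0 (2 * N + 1)) (List.replicate N (a, true) ++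
      (x :: c ++ List.replicate (N + 1) (a, true))) := by
    refine ((heightsIn_replicate N).mono ?_).append hmid ?_
    · exact Set.Icc_subset_Icc_right (by omega)
    · simp only [height_replicate, Set.mem_Icc]
      intros
      omega
  refine ⟨⟨_, rfl, htail.mono Set.Icc_subset_Ici_self⟩, ?_, htail.cons ?_ ?_⟩
  · simp only [blockWord, height_append, height_cons, height_replicate, hx0, hc]
    push_cast
    ring
  · simp only [Set.mem_Iic]
    omega
  · simp only [ha1, Set.mem_Icc, Set.mem_Iic]
    intros
    omega

theorem heightsIn_flatten {N : ℕ} {L : List (List (α × Bool))}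
    (hL : ∀ d ∈ L, d.length = N ∧ height a d = 0) :
    HeightsIn a (Set.Icc (-N) N) L.flatten := by
  induction L with
  | nil => simp [heightsIn_nil]
  | cons d L ih =>
    rw [List.forall_mem_cons] at hL
    obtain ⟨⟨rfl, hd⟩, hL⟩ := hL
    exact (heightsIn_Icc_length d).append (ih hL) (by simp [hd])

theorem height_flatten {L : List (List (α × Bool))} (hL : ∀ d ∈ L, height a d = 0) :
    height a L.flatten = 0 := by
  induction L with
  | nil => simp
  | cons d L ih =>
    rw [List.forall_mem_cons] at hL
    rw [List.flatten_cons, height_append, hL.1, ih hL.2, add_zero]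

end Blocks

section Counting

theorem exists_finset_flatten {β : Type*} {D : Finset (List β)} {N : ℕ}
    (hD : ∀ d ∈ D, d.length = N) (K : ℕ) : ∃ C : Finset (List β), C.card = D.card ^ K ∧
      ∀ c ∈ C, ∃ L : List (List β), L.length = K ∧ (∀ d ∈ L, d ∈ D) ∧ L.flatten = c := by
  classical
  let concat (f : Fin K → D) : List β := (List.ofFn fun i ↦ (f i).1).flatten
  have hconcat : Function.Injective concat := fun f f' h ↦ by
    have hlists := List.eq_iff_flatten_eq.mpr ⟨h, by
      simp [List.map_ofFn, Function.comp_def, hD _ (f _).2, hD _ (f' _).2]⟩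
    exact funext fun i ↦ Subtype.ext (congrFun (List.ofFn_injective hlists) i)
  refine ⟨Finset.univ.image concat, ?_, ?_⟩
  · rw [Finset.card_image_of_injective _ hconcat]
    simp
  · simp only [Finset.mem_image, Finset.mem_univ, true_and, forall_exists_index,
      forall_apply_eq_imp_iff]
    exact fun f ↦ ⟨_, List.length_ofFn, by simp [List.mem_ofFn], rfl⟩

theorem exists_mul_pow_lt_pow {r M : ℝ} (hr : 0 < r) (hrM : r < M) :
    ∃ q : ℕ, r ^ (q + 2) * (2 * (q + 2) + 1) < M ^ q := by
  have hM : 0 < M := hr.trans hrM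
  have hlt : |r / M| < 1 := by rwa [abs_of_pos (div_pos hr hM), div_lt_one hM]
  have hlim : Tendsto (fun q : ℕ ↦ r ^ 2 * (2 * (q * (r / M) ^ q) + 5 * (r / M) ^ q)) atTop
      (𝓝 (r ^ 2 * (2 * 0 + 5 * 0))) :=
    (((tendsto_self_mul_const_pow_of_abs_lt_one hlt).const_mul 2).add
      ((tendsto_pow_atTop_nhds_zero_of_abs_lt_one hlt).const_mul 5)).const_mul _
  simp only [mul_zero, add_zero] at hlim
  obtain ⟨q, hq⟩ := (hlim.eventually_lt_const one_pos).exists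
  refine ⟨q, ?_⟩
  calc r ^ (q + 2) * (2 * (q + 2) + 1)
      = r ^ 2 * (2 * (q * (r / M) ^ q) + 5 * (r / M) ^ q) * M ^ q := by
        rw [div_pow]
        field_simp
        ring
    _ < 1 * M ^ q := by gcongr
    _ = M ^ q := one_mul _

variable {α : Type*} [Fintype α] [DecidableEq α] [Nontrivial α] {a : α}

theorem exists_pow_lt_card_isReducedLoop_height_eq_zero {x : α × Bool} (hx : x.1 ≠ a) {r : ℝ}
    (hr : 0 < r) (hrα : r < 2 * Fintype.card α - 1) :
    ∃ (N : ℕ) (D : Finset (List (α × Bool))), r ^ N < D.card ∧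
      ∀ d ∈ D, d.length = N ∧ IsReducedLoop x d ∧ height a d = 0 := by
  obtain ⟨q, hq⟩ := exists_mul_pow_lt_pow hr hrα
  obtain ⟨D, c, hDc, hc, hD⟩ := exists_finset_isReducedLoop_height_eq_zero hx q
  refine ⟨(q + 2) * 2, D, ?_, hD⟩
  have hcast : (2 * (Fintype.card α : ℝ) - 1) ^ q ≤ c * (2 * (q + 2) + 1) := by
    have hle : 1 ≤ 2 * Fintype.card α := by have := Fintype.card_pos (α := α); omega
    have := Nat.cast_le (α := ℝ).mpr hc
    push_cast [Nat.cast_sub hle] at this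
    exact this
  have hrc : r ^ (q + 2) < c := lt_of_mul_lt_mul_right (hq.trans_le hcast) (by positivity)
  rw [hDc, pow_mul]
  push_cast
  gcongr

/-- The factors `a ^ (N + 1)` of a block cost a bounded number of letters, which is made up for by
choosing the middle part of the block long enough. -/
theorem exists_pow_le_card_isBlock {r : ℝ} (hr : 0 < r) (hrα : r < 2 * Fintype.card α - 1)
    (a : α) : ∃ (h : ℤ) (N : ℕ) (S : Finset (List (α × Bool))), N ≠ 0 ∧ r ^ N ≤ S.card ∧
      ∀ u ∈ S, u.length = N ∧ FreeGroup.IsReduced u ∧ IsBlock a h u := by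
  obtain ⟨b, hba⟩ := exists_ne a
  obtain ⟨N, D, hcard, hD⟩ :=
    exists_pow_lt_card_isReducedLoop_height_eq_zero (x := (b, true)) hba hr hrα
  obtain ⟨K, hK⟩ := pow_unbounded_of_one_lt (r ^ (2 * N + 3))
    ((one_lt_div (pow_pos hr N)).mpr hcard)
  obtain ⟨C, hCcard, hC⟩ := exists_finset_flatten (fun d hd ↦ (hD d hd).1) K
  refine ⟨2 * N + 2, K * N + (2 * N + 3), C.image (blockWord a (b, true) N), by omega, ?_, ?_⟩
  · rw [Finset.card_image_of_injective _ (blockWord_injective ..), hCcard]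
    rw [div_pow, lt_div_iff₀ (by positivity)] at hK
    calc r ^ (K * N + (2 * N + 3)) = r ^ (2 * N + 3) * (r ^ N) ^ K := by ring
      _ ≤ ((D.card ^ K : ℕ) : ℝ) := by exact_mod_cast hK.le
  · simp only [Finset.mem_image, forall_exists_index, and_imp, forall_apply_eq_imp_iff₂]
    intro c hc
    obtain ⟨L, hL, hLD, rfl⟩ := hC c hc
    refine ⟨?_, isReduced_blockWord hba (.flatten fun d hd ↦ (hD d (hLD d hd)).2.1) N,
      isBlock_blockWord hba (height_flatten fun d hd ↦ (hD d (hLD d hd)).2.2)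
        (heightsIn_flatten fun d hd ↦ ⟨(hD d (hLD d hd)).1, (hD d (hLD d hd)).2.2⟩)⟩
    rw [length_blockWord, List.length_flatten,
      List.sum_eq_card_nsmul _ N (by simpa using fun d hd ↦ (hD d (hLD d hd)).1)]
    simp [hL]

end Counting

theorem exists_isAbelianByNilpotent_le_growthRate {m : ℕ} {r : ℝ} (hr : 1 ≤ r)
    (hrm : r < 2 * m - 1) : ∃ (G : Type) (_ : Group G) (σ : Fin m → G),
      Subgroup.closure (Set.range σ) = ⊤ ∧ IsAbelianByNilpotent G ∧ r ≤ growthRate σ := by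
  have hm : 1 < m := by
    have : (1 : ℝ) < m := by linarith
    exact_mod_cast this
  have : Nontrivial (Fin m) := Fin.nontrivial_iff_two_le.mpr hm
  obtain ⟨h, N, S, hN, hcard, hS⟩ :=
    exists_pow_le_card_isBlock (r := r) (by linarith) (by simpa using hrm) (⟨0, by omega⟩ : Fin m)
  exact exists_isAbelianByNilpotent_of_isBlock (fun u hu ↦ (hS u hu).2.2)
    (fun u hu ↦ (hS u hu).2.1) hN (fun u hu ↦ (hS u hu).1.le) (by linarith) hcard

/-- Theorem 3. For every `m ≥ 1` and `ε > 0` there exists an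
`m`-generated group `G` which is an extension of an abelian group by a nilpotent group
(hence amenable) whose growth rate satisfies `ω(G, A) ≥ 2m - 1 - ε`. -/
theorem abelian_by_nilpotent_with_large_growth_exists (m : ℕ) (hm : 1 ≤ m)
    (ε : ℝ) (hε : 0 < ε) :
    ∃ (G : Type) (instG : Group G) (σ : Fin m → G),
      @IsAbelianByNilpotentWithLargeGrowth m ε G instG σ := by
  suffices h : ∃ (G : Type) (_ : Group G) (σ : Fin m → G), Subgroup.closure (Set.range σ) = ⊤ ∧
      IsAbelianByNilpotent G ∧ 2 * (m : ℝ) - 1 - ε ≤ growthRate σ by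
    obtain ⟨G, _, σ, hσ, hG, hgrowth⟩ := h
    exact ⟨G, _, σ, hσ, hG, hG.isAmenable, hgrowth⟩
  obtain hlt | hge := lt_or_ge (2 * (m : ℝ) - 1 - ε) 1
  · exact ⟨Unit, inferInstance, fun _ ↦ 1, Subsingleton.elim _ _,
      isAbelianByNilpotent_of_ker (MonoidHom.id Unit) (fun _ _ _ _ ↦ rfl),
      hlt.le.trans one_le_growthRate⟩
  · exact exists_isAbelianByNilpotent_le_growthRate hge (by linarith)
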